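/- Let n > 6 be an integer. There is no non-unital associative ℂ-algebra A containing linearly independent vectors e₁, …, eₙ such that e₁·e₁ = e₂, e₁·e₂ = 0, e₁·eᵢ = e_{i+1} for all 3 ≤ i ≤ n−2, e₁·e_{n−1} = 0 and e₁·eₙ = 0. (In other words, for n > 6 the left-multiplication operator L_{e₁} cannot have, with respect to an adapted basis headed by e₁, the Jordan block form diag(J₂, J_{n−3}, J₁); by the same argument the form diag(J₁, J_{n−3}, J₂) is also impossible.) -/

import Mathlib

/-- For `n > 6` there is no non-unital associative `ℂ`-algebra containing
linearly independent vectors `e₁, …, eₙ` with `e₁e₁ = e₂`, `e₁e₂ = 0`,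
`e₁eᵢ = e_{i+1}` for `3 ≤ i ≤ n-2`, `e₁e_{n-1} = 0` and `e₁eₙ = 0`; i.e. the
left-multiplication operator `L_{e₁}` cannot have Jordan form `diag(J₂, J_{n-3}, J₁)`
with respect to an adapted basis headed by `e₁`. -/
theorem no_adapted_basis_with_J2_first (n : ℕ) (hn : 6 < n) :
    ∀ (A : Type*) [NonUnitalRing A] [Module ℂ A] [SMulCommClass ℂ A A] [IsScalarTower ℂ A A],
      ¬ ∃ e : ℕ → A,
          LinearIndependent ℂ (fun i : Fin n => e (i.1 + 1)) ∧
          e 1 * e 1 = e 2 ∧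
          e 1 * e 2 = 0 ∧
          (∀ i : ℕ, 3 ≤ i → i ≤ n - 2 → e 1 * e i = e (i + 1)) ∧
          e 1 * e (n - 1) = 0 ∧
          e 1 * e n = 0 := by
  -- Since `e₁(e₁e₁) = 0`, the operator `L_{e₁}³` vanishes, yet it sends `e₃` to `e₆ ≠ 0`.
  rintro A _ _ _ _ ⟨e, hli, h11, h12, hchain, -, -⟩
  have h3 : e 1 * e 3 = e 4 := hchain 3 (by omega) (by omega)
  have h4 : e 1 * e 4 = e 5 := hchain 4 (by omega) (by omega)
  -- `5 ≤ n - 2` is exactly the hypothesis `6 < n`.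
  have h5 : e 1 * e 5 = e 6 := hchain 5 (by omega) (by omega)
  apply hli.ne_zero (⟨5, by omega⟩ : Fin n)
  calc e 6 = e 1 * (e 1 * (e 1 * e 3)) := by rw [h3, h4, h5]
    _ = (e 1 * (e 1 * e 1)) * e 3 := by simp only [mul_assoc]
    _ = 0 := by rw [h11, h12, zero_mul]
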